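/- arXiv:2210.02716 — 9 statements merged into one kernel-verified Lean document; each statement's English description precedes it below -/
import Mathlib

section
/- Let k₁, k₂ ∈ ℤ and s₁, s₂ ∈ ℂ. If (z/|z|)^{k₁} · |z|^{s₁} = (z/|z|)^{k₂} · |z|^{s₂} for every z ∈ ℂˣ, then k₁ = k₂ and s₁ = s₂. (Uniqueness of the parameters (k, s) of a quasi-character of ℂˣ.) -/
/-- Uniqueness of the parameters `(k, s)` of a quasi-character of `ℂˣ`:
if `(z/|z|)^k₁ ⬝ |z|^{s₁} = (z/|z|)^k₂ ⬝ |z|^{s₂}` for all `z ∈ ℂˣ`,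
then `k₁ = k₂` and `s₁ = s₂`. Here `|z|^s := exp (s * log |z|)`. -/
theorem quasi_char_complex_params_unique (k₁ k₂ : ℤ) (s₁ s₂ : ℂ)
    (h : ∀ z : ℂˣ,
      ((z : ℂ) / ‖(z : ℂ)‖) ^ k₁ *
        Complex.exp (s₁ * Real.log (‖(z : ℂ)‖)) =
      ((z : ℂ) / ‖(z : ℂ)‖) ^ k₂ *
        Complex.exp (s₂ * Real.log (‖(z : ℂ)‖))) :
    k₁ = k₂ ∧ s₁ = s₂ := by
  constructor
  · have h1 := h (Units.mk0 (Complex.exp ((1 : ℝ) * Complex.I)) (Complex.exp_ne_zero _))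
    rw [Units.val_mk0, Complex.norm_exp_ofReal_mul_I] at h1
    simp only [Real.log_one, Complex.ofReal_zero, mul_zero, Complex.exp_zero, mul_one,
      Complex.ofReal_one, div_one, one_mul] at h1
    rw [← Complex.exp_int_mul, ← Complex.exp_int_mul, Complex.exp_eq_exp_iff_exists_int] at h1
    obtain ⟨n, hn⟩ := h1
    have h2 : (k₁ : ℝ) = k₂ + n * (2 * Real.pi) := by
      have := congrArg Complex.im hn
      simpa using this
    by_cases hn0 : n = 0
    · subst hn0
      have : (k₁ : ℝ) = k₂ := by simpa using h2
      exact_mod_cast this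
    · exfalso
      apply irrational_pi
      refine ⟨((k₁ - k₂ : ℤ) : ℚ) / ((2 * n : ℤ) : ℚ), ?_⟩
      have : (n : ℝ) ≠ 0 := by exact_mod_cast hn0
      push_cast
      rw [h2]
      field_simp
      ring
  · have key : ∀ t : ℝ, Complex.exp (s₁ * t) = Complex.exp (s₂ * t) := by
      intro t
      have h1 := h (Units.mk0 (Complex.exp (t : ℂ)) (Complex.exp_ne_zero _))
      rw [Units.val_mk0, Complex.norm_exp, Complex.ofReal_re, Real.log_exp,
        Complex.ofReal_exp, div_self (Complex.exp_ne_zero _), one_zpow, one_zpow,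
        one_mul, one_mul] at h1
      exact h1
    have hd : ∀ s : ℂ, HasDerivAt (fun t : ℝ => Complex.exp (s * t)) s 0 := by
      intro s
      have h0 : HasDerivAt (fun t : ℝ => s * (t : ℂ)) (s * 1) 0 :=
        (Complex.ofRealCLM.hasDerivAt (x := (0 : ℝ))).const_mul s
      simpa using h0.cexp
    have h1 := hd s₁
    rw [funext key] at h1
    exact h1.unique (hd s₂)
end

section
/- Every continuous group homomorphism χ : ℂˣ → ℂˣ is of the form χ(z) = (z/|z|)^k · |z|^s for some k ∈ ℤ and s ∈ ℂ (and this pair (k, s) is unique). -/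
lemma qc_exp_inj {a b : ℂ} (h : ∀ t : ℝ, Complex.exp (a * t) = Complex.exp (b * t)) : a = b := by
  have H : ∀ c : ℂ, HasDerivAt (fun t : ℝ => Complex.exp (c * t)) c 0 := by
    intro c
    have h1 : HasDerivAt (fun t : ℝ => c * (t : ℂ)) (c * 1) (0 : ℝ) :=
      (Complex.ofRealCLM.hasDerivAt (x := (0 : ℝ))).const_mul c
    simpa using h1.cexp
  have h1 := H a
  rw [funext h] at h1
  exact h1.unique (H b)

lemma qc_real (f : ℝ → ℂ) (hf : Continuous f) (h0 : f 0 = 1)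
    (hadd : ∀ x y, f (x + y) = f x * f y) : ∃ s : ℂ, ∀ x : ℝ, f x = Complex.exp (s * x) := by
  let F : ℝ → ℂ := fun x => ∫ t in (0 : ℝ)..x, f t
  have hF : ∀ x, HasDerivAt F (f x) x := fun x =>
    intervalIntegral.integral_hasDerivAt_right (hf.intervalIntegrable _ _)
      (hf.stronglyMeasurableAtFilter _ _) hf.continuousAt
  obtain ⟨c, hc⟩ : ∃ c, F c ≠ 0 := by
    by_contra! hcon
    have h1 := hF 0
    rw [show F = fun _ => (0 : ℂ) from funext hcon] at h1
    have := h1.unique (hasDerivAt_const (0 : ℝ) (0 : ℂ))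
    simp [h0] at this
  have key : ∀ x, f x = (F (x + c) - F x) / F c := by
    intro x
    rw [eq_div_iff hc]
    have h1 : F (x + c) - F x = ∫ t in x..(x + c), f t :=
      intervalIntegral.integral_interval_sub_left (hf.intervalIntegrable _ _)
        (hf.intervalIntegrable _ _)
    have h2 : ∫ t in (0 : ℝ)..c, f (x + t) = ∫ t in x..(x + c), f t := by
      simp
    rw [h1, ← h2]
    simp only [hadd]
    rw [intervalIntegral.integral_const_mul]
  have hd0 : DifferentiableAt ℝ f 0 := by
    rw [funext key]
    have h1 : DifferentiableAt ℝ (fun x => F (x + c)) 0 :=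
      ((hF (0 + c)).comp_add_const 0 c).differentiableAt
    exact (h1.sub (hF 0).differentiableAt).div_const _
  have hd : ∀ x, HasDerivAt f (f x * deriv f 0) x := by
    intro x
    have h1 : HasDerivAt f (deriv f 0) (x - x) := by simpa using hd0.hasDerivAt
    have h2 := (h1.comp_sub_const x x).const_mul (f x)
    have h3 : (fun y => f x * f (y - x)) = f := by
      funext y
      rw [← hadd]; congr 1; ring
    rw [h3] at h2
    exact h2
  set s := deriv f 0
  have hexp : ∀ x : ℝ, HasDerivAt (fun t : ℝ => Complex.exp (-s * t)) (Complex.exp (-s * x) * (-s)) x := by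
    intro x
    have h1 : HasDerivAt (fun t : ℝ => -s * (t : ℂ)) (-s * 1) x :=
      (Complex.ofRealCLM.hasDerivAt (x := x)).const_mul (-s)
    simpa using h1.cexp
  have hg : ∀ x : ℝ, HasDerivAt (fun t : ℝ => f t * Complex.exp (-s * t)) 0 x := by
    intro x
    have h4 := (hd x).mul (hexp x)
    have h5 : f x * s * Complex.exp (-s * x) + f x * (Complex.exp (-s * x) * (-s)) = 0 := by ring
    rw [h5] at h4
    exact h4
  refine ⟨s, fun x => ?_⟩
  have := is_const_of_deriv_eq_zero (fun x => (hg x).differentiableAt) (fun x => (hg x).deriv) x 0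
  simp only [h0, Complex.ofReal_zero, mul_zero, Complex.exp_zero, mul_one] at this
  rw [neg_mul, Complex.exp_neg] at this
  exact (mul_inv_eq_one₀ (Complex.exp_ne_zero _)).1 this

/-- The exponential as a unit. -/
noncomputable def qcE (w : ℂ) : ℂˣ := Units.mk0 (Complex.exp w) (Complex.exp_ne_zero w)

lemma qcE_add (w v : ℂ) : qcE (w + v) = qcE w * qcE v := by
  ext; simp [qcE, Complex.exp_add]

lemma qcE_zero : qcE 0 = 1 := by
  ext; simp [qcE]

lemma qcE_cont : Continuous qcE := by
  rw [Units.isEmbedding_val₀.continuous_iff]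
  exact Complex.continuous_exp

lemma qc_one (χ : ℂˣ →* ℂˣ) (hχ : Continuous fun z : ℂˣ => (χ z : ℂ)) (v : ℂ) :
    ∃ s : ℂ, ∀ x : ℝ, (χ (qcE (x * v)) : ℂ) = Complex.exp (s * x) := by
  apply qc_real
  · exact hχ.comp (qcE_cont.comp (by fun_prop))
  · simp [qcE_zero]
  · intro x y
    simp [add_mul, qcE_add]

/-- Every continuous group homomorphism `χ : ℂˣ → ℂˣ` is of the form
`χ(z) = (z/|z|)^k ⬝ |z|^s` for a unique pair `(k, s) ∈ ℤ × ℂ`,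
where `|z|^s := exp (s * log |z|)`. -/
theorem quasi_char_complex_classification (χ : ℂˣ →* ℂˣ)
    (hχ : Continuous fun z : ℂˣ => (χ z : ℂ)) :
    ∃! ks : ℤ × ℂ, ∀ z : ℂˣ,
      (χ z : ℂ) = ((z : ℂ) / ‖(z : ℂ)‖) ^ ks.1 *
        Complex.exp (ks.2 * Real.log ‖(z : ℂ)‖) := by
  obtain ⟨s, hs⟩ := qc_one χ hχ 1
  obtain ⟨a, ha⟩ := qc_one χ hχ Complex.I
  have hpi : (Real.pi : ℂ) ≠ 0 := by exact_mod_cast Real.pi_ne_zero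
  obtain ⟨n, hn⟩ : ∃ n : ℤ, a = n * Complex.I := by
    have h1 := ha (2 * Real.pi)
    have h2 : qcE (((2 * Real.pi : ℝ) : ℂ) * Complex.I) = 1 := by
      ext; simp [qcE, Complex.exp_two_pi_mul_I]
    rw [h2, map_one, Units.val_one, eq_comm, Complex.exp_eq_one_iff] at h1
    obtain ⟨n, hn⟩ := h1
    refine ⟨n, ?_⟩
    push_cast at hn
    apply mul_right_cancel₀ (mul_ne_zero two_ne_zero hpi)
    rw [hn]; ring
  have hr : ∀ (t : ℝ), ‖((qcE (t * 1) : ℂˣ) : ℂ)‖ = Real.exp t := by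
    intro t; simp [qcE, Complex.norm_exp]
  have hi : ∀ (t : ℝ), ‖((qcE (t * Complex.I) : ℂˣ) : ℂ)‖ = 1 := by
    intro t; simp [qcE, Complex.norm_exp]
  refine ⟨(n, s), ?_, ?_⟩
  · intro z
    have hz : (‖(z : ℂ)‖ : ℂ) ≠ 0 := by simp
    have hlog : Complex.exp (Real.log ‖(z : ℂ)‖ : ℝ) = (‖(z : ℂ)‖ : ℂ) := by
      rw [← Complex.ofReal_exp, Real.exp_log (by simp)]
    have harg : (z : ℂ) = ‖(z : ℂ)‖ * Complex.exp (Complex.arg z * Complex.I) :=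
      (Complex.norm_mul_exp_arg_mul_I _).symm
    have hzz : z = qcE ((Real.log ‖(z : ℂ)‖ : ℝ) * 1) * qcE ((Complex.arg z : ℝ) * Complex.I) := by
      ext
      rw [Units.val_mul]
      simp only [qcE, Units.val_mk0, mul_one]
      rw [hlog, ← harg]
    have hq : (z : ℂ) / ‖(z : ℂ)‖ = Complex.exp (Complex.arg z * Complex.I) := by
      rw [div_eq_iff hz, mul_comm]; exact harg
    have h3 : (χ z : ℂ) = Complex.exp (s * Real.log ‖(z : ℂ)‖) * Complex.exp (a * Complex.arg z) := by
      rw [← hs, ← ha, ← Units.val_mul, ← map_mul, ← hzz]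
    simp only
    rw [h3, hq, ← Complex.exp_int_mul, mul_comm, hn]
    congr 2; ring
  · rintro ⟨k, s'⟩ h
    simp only at h
    have e1 : s' = s := by
      apply qc_exp_inj
      intro t
      rw [← hs, h, hr, Real.log_exp]
      simp [qcE]
    have e2 : (k : ℂ) * Complex.I = n * Complex.I := by
      apply qc_exp_inj
      intro t
      rw [← hn, ← ha, h, hi]
      simp only [qcE, Units.val_mk0, Real.log_one, Complex.ofReal_zero, mul_zero,
        Complex.exp_zero, mul_one, Complex.ofReal_one, div_one]
      rw [← Complex.exp_int_mul]
      congr 1; ring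
    have e3 : k = n := by
      exact_mod_cast mul_right_cancel₀ Complex.I_ne_zero e2
    rw [e1, e3]
end

section
/- Every continuous group homomorphism χ : ℝˣ → ℂˣ is of the form χ(x) = sgn(x)^k · |x|^s for a unique pair (k, s) ∈ {0, 1} × ℂ, where |x|^s := Complex.exp(s · Real.log |x|); moreover such a χ satisfies |χ(x)| = 1 for all x ∈ ℝˣ if and only if Re(s) = 0. -/
lemma aux_exp (f : ℝ → ℂ) (hf : Continuous f) (h0 : f 0 = 1)
    (hadd : ∀ x y, f (x + y) = f x * f y) : ∃ c : ℂ, ∀ x : ℝ, f x = Complex.exp (c * x) := by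
  let F : ℝ → ℂ := fun x => ∫ t in (0:ℝ)..x, f t
  have hF : ∀ x, HasDerivAt F (f x) x := fun x =>
    intervalIntegral.integral_hasDerivAt_right (hf.intervalIntegrable _ _)
      hf.stronglyMeasurable.stronglyMeasurableAtFilter hf.continuousAt
  have ha : ∃ a, F a ≠ 0 := by
    by_contra! h
    have h1 : F = fun _ => 0 := funext h
    have h2 := hF 0
    rw [h1] at h2
    have h3 := h2.unique (hasDerivAt_const (0:ℝ) (0:ℂ))
    rw [h0] at h3
    exact one_ne_zero h3
  obtain ⟨a, ha⟩ := ha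
  have key : ∀ x, f x * F a = F (x + a) - F x := by
    intro x
    have e1 : F (x + a) - F x = ∫ t in x..(x + a), f t :=
      intervalIntegral.integral_interval_sub_left (hf.intervalIntegrable _ _)
        (hf.intervalIntegrable _ _)
    have e2 : (∫ t in (0:ℝ)..a, f (x + t)) = ∫ t in x..(x + a), f t := by
      rw [intervalIntegral.integral_comp_add_left (fun t => f t)]; simp
    rw [e1, ← e2]
    simp_rw [hadd]
    rw [intervalIntegral.integral_const_mul]
  have hfeq : f = fun x => (F (x + a) - F x) / F a := by
    funext x; rw [← key]; field_simp
  have hd : ∀ x, HasDerivAt f (f x * ((f a - 1) / F a)) x := by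
    intro x
    have h1 : HasDerivAt (fun x => (F (x + a) - F x) / F a) ((f (x + a) - f x) / F a) x :=
      (((hF (x + a)).comp_add_const x a).sub (hF x)).div_const _
    rw [← hfeq] at h1
    convert h1 using 1
    rw [hadd]; ring
  set c := (f a - 1) / F a
  refine ⟨c, ?_⟩
  have he : ∀ x : ℝ, HasDerivAt (fun x : ℝ => Complex.exp (-(c * x))) 
      (Complex.exp (-(c * x)) * (-(c * 1))) x := fun x =>
    (((Complex.ofRealCLM.hasDerivAt (x := x)).const_mul c).neg).cexp
  have hg : ∀ x : ℝ, HasDerivAt (fun x : ℝ => f x * Complex.exp (-(c * x))) 0 x := by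
    intro x
    have h1 : HasDerivAt (fun x : ℝ => f x * Complex.exp (-(c * x))) _ x := (hd x).mul (he x)
    refine h1.congr_deriv ?_
    ring
  intro x
  have h1 := is_const_of_deriv_eq_zero (fun x => (hg x).differentiableAt)
    (fun x => (hg x).deriv) x 0
  simp only [h0, Complex.ofReal_zero, mul_zero, neg_zero, Complex.exp_zero, mul_one] at h1
  rw [Complex.exp_neg] at h1
  have := Complex.exp_ne_zero (c * x)
  field_simp at h1
  exact h1

lemma aux_uniq (s t : ℂ) (h : ∀ x : ℝ, Complex.exp (s * x) = Complex.exp (t * x)) : s = t := by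
  have he : ∀ c : ℂ, HasDerivAt (fun x : ℝ => Complex.exp (c * x)) 
      (Complex.exp (c * (0:ℝ)) * (c * 1)) 0 := fun c =>
    ((Complex.ofRealCLM.hasDerivAt (x := 0)).const_mul c).cexp
  have h1 := he s
  rw [funext h] at h1
  simpa using h1.unique (he t)

/-- positive unit `exp t` -/
noncomputable def auxU (t : ℝ) : ℝˣ := Units.mk0 (Real.exp t) (Real.exp_ne_zero t)

lemma auxU_cont : Continuous auxU := by
  rw [Units.continuous_iff]
  refine ⟨Real.continuous_exp, ?_⟩
  have : (fun t => ((auxU t)⁻¹ : ℝˣ).val) = fun t => Real.exp (-t) := by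
    funext t; simp [auxU, Real.exp_neg]
  exact this ▸ (Real.continuous_exp.comp continuous_neg)

lemma auxU_sign (t : ℝ) : Real.sign (auxU t : ℝ) = 1 := Real.sign_of_pos (Real.exp_pos t)

lemma auxU_log (t : ℝ) : Real.log |(auxU t : ℝ)| = t := by simp [auxU]

lemma auxU_pos (x : ℝˣ) (hx : 0 < (x : ℝ)) : auxU (Real.log |(x : ℝ)|) = x := by
  ext; simp [auxU, Real.exp_log hx]

/-- Every continuous group homomorphism `χ : ℝˣ → ℂˣ` is of the form
`χ(x) = sgn(x)^k ⬝ |x|^s` for a unique pair `(k, s) ∈ {0, 1} × ℂ`, where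
`|x|^s := exp (s * log |x|)`; moreover such a `χ` satisfies `|χ(x)| = 1`
for all `x ∈ ℝˣ` if and only if `Re s = 0`. -/
theorem quasi_char_real_classification (χ : ℝˣ →* ℂˣ)
    (hχ : Continuous fun x : ℝˣ => (χ x : ℂ)) :
    (∃! ks : ℤ × ℂ, ks.1 ∈ ({0, 1} : Set ℤ) ∧ ∀ x : ℝˣ,
      (χ x : ℂ) = ((Real.sign (x : ℝ) : ℝ) : ℂ) ^ ks.1 *
        Complex.exp (ks.2 * Real.log |(x : ℝ)|)) ∧
    ∀ (k : ℤ) (s : ℂ), k ∈ ({0, 1} : Set ℤ) →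
      (∀ x : ℝˣ, (χ x : ℂ) = ((Real.sign (x : ℝ) : ℝ) : ℂ) ^ k *
        Complex.exp (s * Real.log |(x : ℝ)|)) →
      ((∀ x : ℝˣ, ‖(χ x : ℂ)‖ = 1) ↔ s.re = 0) := by
  refine ⟨?_, ?_⟩
  · obtain ⟨c, hc⟩ := aux_exp (fun t => (χ (auxU t) : ℂ)) (hχ.comp auxU_cont)
      (by
        have : auxU 0 = 1 := by ext; simp [auxU]
        simp [this])
      (by
        intro x y
        have : auxU (x + y) = auxU x * auxU y := by ext; simp [auxU, Real.exp_add]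
        simp [this])
    have hneg : (χ (-1) : ℂ) = 1 ∨ (χ (-1) : ℂ) = -1 := by
      have h : (χ (-1) : ℂ) * (χ (-1) : ℂ) = 1 := by
        rw [← Units.val_mul, ← map_mul]; simp
      exact mul_self_eq_one_iff.1 h
    have hpos : ∀ x : ℝˣ, 0 < (x : ℝ) → (χ x : ℂ) = Complex.exp (c * Real.log |(x : ℝ)|) := by
      intro x hx
      rw [← hc, auxU_pos x hx]
    have hall : ∀ k : ℤ, (χ (-1) : ℂ) = (-1) ^ k → ∀ x : ℝˣ,
        (χ x : ℂ) = ((Real.sign (x : ℝ) : ℝ) : ℂ) ^ k *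
        Complex.exp (c * Real.log |(x : ℝ)|) := by
      intro k hk x
      rcases lt_or_gt_of_ne x.ne_zero with hx | hx
      · have h1 := hpos (-x) (by simpa using hx)
        have h2 : χ x = χ (-1) * χ (-x) := by rw [← map_mul]; simp
        rw [h2, Units.val_mul, h1, hk, Real.sign_of_neg hx]
        simp
      · rw [hpos x hx, Real.sign_of_pos hx]; simp
    have hun : ∀ (k l : ℤ) (s t : ℂ), k ∈ ({0, 1} : Set ℤ) → l ∈ ({0, 1} : Set ℤ) →
        (∀ x : ℝˣ, (χ x : ℂ) = ((Real.sign (x : ℝ) : ℝ) : ℂ) ^ k *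
          Complex.exp (s * Real.log |(x : ℝ)|)) →
        (∀ x : ℝˣ, (χ x : ℂ) = ((Real.sign (x : ℝ) : ℝ) : ℂ) ^ l *
          Complex.exp (t * Real.log |(x : ℝ)|)) → k = l ∧ s = t := by
      intro k l s t hk hl h1 h2
      constructor
      · have h3 := (h1 (-1)).symm.trans (h2 (-1))
        have h4 : Real.sign (-1) = -1 := Real.sign_of_neg (by norm_num)
        simp only [Units.val_neg, Units.val_one, h4, abs_neg, abs_one, Real.log_one] at h3
        rcases hk with rfl | rfl <;> rcases hl with rfl | rfl <;> first | rfl | (exfalso; norm_num at h3)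
      · apply aux_uniq
        intro x
        have h3 := (h1 (auxU x)).symm.trans (h2 (auxU x))
        rw [auxU_sign, auxU_log] at h3
        simpa using h3
    have hex : ∃ k : ℤ, k ∈ ({0, 1} : Set ℤ) ∧ (χ (-1) : ℂ) = (-1) ^ k := by
      rcases hneg with h | h
      · exact ⟨0, by simp, by simp [h]⟩
      · exact ⟨1, by simp, by simp [h]⟩
    obtain ⟨k, hk, hk'⟩ := hex
    refine ⟨(k, c), ⟨hk, hall k hk'⟩, ?_⟩
    rintro ⟨l, t⟩ ⟨hl, h⟩
    obtain ⟨rfl, rfl⟩ := hun l k t c hl hk h (hall k hk')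
    rfl
  · intro k s hk h
    have hn : ∀ x : ℝˣ, ‖(χ x : ℂ)‖ = Real.exp (s.re * Real.log |(x : ℝ)|) := by
      intro x
      have h1 : ‖((Real.sign (x : ℝ) : ℝ) : ℂ)‖ = 1 := by
        rcases Real.sign_apply_eq_of_ne_zero _ x.ne_zero with h | h <;> simp [h]
      rw [h x, norm_mul, norm_zpow, h1, Complex.norm_exp]
      simp
    constructor
    · intro h1
      have h2 := (hn (auxU 1)).symm.trans (h1 _)
      rw [auxU_log] at h2
      simpa using h2
    · intro h1 x
      rw [hn, h1]; simp
end

section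
/- Let p, q ∈ ℤ, k ∈ ℤ, φ ∈ ℝ and w ∈ ℝ. Then (z/|z|)^k · |z|^{2iφ − w} = z^{−p} · conj(z)^{−q} holds for every z ∈ ℂˣ if and only if k = q − p, φ = 0 and w = p + q (in particular w ∈ ℤ). (Characterization of algebraic infinity-type at a complex place.) -/
theorem ait_aux (p q k : ℤ) (φ w r θ : ℝ) (z : ℂ) (hz : z = Complex.exp (r + θ * Complex.I)) :
    (z / ‖z‖) ^ k * Complex.exp ((2 * Complex.I * (φ : ℂ) - (w : ℂ)) * Real.log ‖z‖) =
      Complex.exp (k * (θ * Complex.I) + (2 * Complex.I * φ - w) * r) ∧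
    z ^ (-p) * (starRingEnd ℂ z) ^ (-q) =
      Complex.exp (-p * (r + θ * Complex.I) - q * (r - θ * Complex.I)) := by
  have hn : ‖z‖ = Real.exp r := by rw [hz, Complex.norm_exp]; simp
  have hc : starRingEnd ℂ z = Complex.exp (r - θ * Complex.I) := by
    rw [hz, ← Complex.exp_conj]; simp [sub_eq_add_neg]
  constructor
  · have h1 : z / ‖z‖ = Complex.exp (θ * Complex.I) := by
      rw [hn, hz, Complex.ofReal_exp, ← Complex.exp_sub]; congr 1; ring
    rw [h1, hn, Real.log_exp, ← Complex.exp_int_mul, ← Complex.exp_add]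
  · rw [hc, hz, ← Complex.exp_int_mul, ← Complex.exp_int_mul, ← Complex.exp_add]
    congr 1; push_cast; ring

theorem ait_pi (h : Complex.exp (Real.pi * Complex.I) = 1) : False := by
  rw [Complex.exp_pi_mul_I] at h; norm_num at h

/-- Characterization of algebraic infinity-type at a complex place.
Let `p, q, k ∈ ℤ` and `φ, w ∈ ℝ`. Then
`(z/|z|)^k ⬝ |z|^{2iφ − w} = z^{−p} ⬝ conj(z)^{−q}` for every `z ∈ ℂˣ`
if and only if `k = q − p`, `φ = 0` and `w = p + q`
(in particular `w ∈ ℤ`). Here `|z|^s := exp (s * log |z|)`. -/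
theorem algebraic_infinity_type_iff (p q k : ℤ) (φ w : ℝ) :
    (∀ z : ℂˣ,
      ((z : ℂ) / ‖(z : ℂ)‖) ^ k *
        Complex.exp ((2 * Complex.I * (φ : ℂ) - (w : ℂ)) *
          Real.log ‖(z : ℂ)‖) =
      (z : ℂ) ^ (-p) * (starRingEnd ℂ (z : ℂ)) ^ (-q)) ↔
    (k = q - p ∧ φ = 0 ∧ (w : ℝ) = (p : ℝ) + (q : ℝ)) := by
  constructor
  · intro h
    have H : ∀ r θ : ℝ, Complex.exp (k * (θ * Complex.I) + (2 * Complex.I * φ - w) * r) =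
        Complex.exp (-p * (r + θ * Complex.I) - q * (r - θ * Complex.I)) := by
      intro r θ
      have h1 := h (Units.mk0 (Complex.exp (r + θ * Complex.I)) (Complex.exp_ne_zero _))
      have h2 := ait_aux p q k φ w r θ _ rfl
      rw [← h2.1, ← h2.2]
      exact h1
    have H' : ∀ r θ : ℝ, Complex.exp (k * (θ * Complex.I) + (2 * Complex.I * φ - w) * r -
        (-p * (r + θ * Complex.I) - q * (r - θ * Complex.I))) = 1 := by
      intro r θ
      rw [Complex.exp_sub, H, div_self (Complex.exp_ne_zero _)]
    have hw : w = p + q := by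
      have h1 := congrArg norm (H' 1 0)
      rw [Complex.norm_exp, norm_one, Real.exp_eq_one_iff] at h1
      simp at h1
      linarith
    refine ⟨?_, ?_, hw⟩
    · by_contra hk
      have hm : ((k : ℂ) - q + p) ≠ 0 := by
        intro h0
        apply hk
        have : k - q + p = 0 := by exact_mod_cast h0
        omega
      apply ait_pi
      rw [← H' 0 (Real.pi / (k - q + p))]
      congr 1
      push_cast
      field_simp
      ring
    · by_contra hφ
      have hφ' : (φ : ℂ) ≠ 0 := by exact_mod_cast hφ
      apply ait_pi
      rw [← H' (Real.pi / (2 * φ)) 0]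
      congr 1
      rw [hw]
      push_cast
      field_simp
      ring
  · rintro ⟨rfl, rfl, rfl⟩ z
    have hz : (z : ℂ) = Complex.exp ((Complex.log z).re + (Complex.log z).im * Complex.I) := by
      rw [Complex.re_add_im, Complex.exp_log z.ne_zero]
    have h2 := ait_aux p q (q - p) 0 (p + q) _ _ _ hz
    rw [h2.1, h2.2]
    congr 1
    push_cast
    ring
end

section
/- Let F be a number field with F⁻ ≠ {0}. Then F⁺ + F⁻ is a subfield of F which is a CM field, with maximal totally real subfield F⁺; in particular F admits a CM subfield. -/
/-- The set `F⁺` of elements of `F` all of whose complex embeddings are real,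
as a `ℚ`-subspace of `F`. -/
def Fplus (F : Type*) [Field F] [NumberField F] : Submodule ℚ F where
  carrier := {x | ∀ σ : F →+* ℂ, σ x = starRingEnd ℂ (σ x)}
  add_mem' := by
    intro a b ha hb σ
    simp only [map_add]
    linear_combination ha σ + hb σ
  zero_mem' := by intro σ; simp
  smul_mem' := by
    intro q x hx σ
    simp only [Rat.smul_def, map_mul, map_ratCast]
    linear_combination (q : ℂ) * hx σ

/-- The set `F⁻` of elements of `F` all of whose complex embeddings are purely
imaginary, as a `ℚ`-subspace of `F`. -/
def Fminus (F : Type*) [Field F] [NumberField F] : Submodule ℚ F where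
  carrier := {x | ∀ σ : F →+* ℂ, σ x = - starRingEnd ℂ (σ x)}
  add_mem' := by
    intro a b ha hb σ
    simp only [map_add]
    linear_combination ha σ + hb σ
  zero_mem' := by intro σ; simp
  smul_mem' := by
    intro q x hx σ
    simp only [Rat.smul_def, map_mul, map_ratCast]
    linear_combination (q : ℂ) * hx σ

/-- A field is totally real if every ring embedding into `ℂ` has image
contained in `ℝ`. -/
def IsTotallyRealField (K : Type*) [Field K] : Prop :=
  ∀ (σ : K →+* ℂ) (x : K), (σ x).im = 0

/-- A field is CM if no ring embedding into `ℂ` has image contained in `ℝ`,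
and it is a degree-2 extension of a totally real subfield. -/
def IsCMField (K : Type*) [Field K] : Prop :=
  (∀ σ : K →+* ℂ, ∃ x : K, (σ x).im ≠ 0) ∧
  ∃ k : Subfield K, IsTotallyRealField k ∧ Module.finrank k K = 2

theorem exists_lift_embedding {L : Type*} [Field L] [CharZero L] [Algebra.IsAlgebraic ℚ L]
    (E : Subfield L) (φ : E →+* ℂ) : ∃ ψ : L →+* ℂ, ∀ x : E, ψ x = φ x := by
  have : Algebra.IsAlgebraic E L := Algebra.IsAlgebraic.tower_top (K := ℚ) E
  let _ : Algebra E ℂ := φ.toAlgebra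
  let ψ : L →ₐ[E] ℂ := IsAlgClosed.lift
  exact ⟨ψ.toRingHom, fun x => ψ.commutes x⟩

/-- Elements having a "universal complex conjugate" in `F`. -/
def conjField (F : Type*) [Field F] : Subfield F where
  carrier := {x | ∃ y : F, ∀ σ : F →+* ℂ, σ y = starRingEnd ℂ (σ x)}
  mul_mem' := by
    rintro a b ⟨a', ha⟩ ⟨b', hb⟩
    exact ⟨a' * b', fun σ => by simp [ha, hb]⟩
  one_mem' := ⟨1, fun σ => by simp⟩
  add_mem' := by
    rintro a b ⟨a', ha⟩ ⟨b', hb⟩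
    exact ⟨a' + b', fun σ => by simp [ha, hb]⟩
  zero_mem' := ⟨0, fun σ => by simp⟩
  neg_mem' := by
    rintro a ⟨a', ha⟩
    exact ⟨-a', fun σ => by simp [ha]⟩
  inv_mem' := by
    rintro a ⟨a', ha⟩
    exact ⟨a'⁻¹, fun σ => by simp [ha]⟩

/-- `F⁺` as a subfield of a subfield. -/
def realIn (F : Type*) [Field F] (K : Subfield F) : Subfield K where
  carrier := {x | ∀ σ : F →+* ℂ, σ x = starRingEnd ℂ (σ x)}
  mul_mem' := by
    intro a b ha hb σ
    have h1 := ha σ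
    have h2 := hb σ
    simp only [MulMemClass.coe_mul, map_mul]
    rw [← h1, ← h2]
  one_mem' := fun σ => by simp
  add_mem' := by
    intro a b ha hb σ
    have h1 := ha σ
    have h2 := hb σ
    simp only [AddMemClass.coe_add, map_add]
    rw [← h1, ← h2]
  zero_mem' := fun σ => by simp
  neg_mem' := by
    intro a ha σ
    have h1 := ha σ
    simp only [NegMemClass.coe_neg, map_neg]
    rw [← h1]
  inv_mem' := by
    intro a ha σ
    have h1 := ha σ
    change σ ((a : F)⁻¹) = starRingEnd ℂ (σ ((a : F)⁻¹))
    rw [map_inv₀, map_inv₀, ← h1]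

theorem mem_conjField_of_Fplus {F : Type*} [Field F] [NumberField F] {x : F}
    (hx : x ∈ Fplus F) : x ∈ conjField F := ⟨x, hx⟩

theorem mem_conjField_of_Fminus {F : Type*} [Field F] [NumberField F] {x : F}
    (hx : x ∈ Fminus F) : x ∈ conjField F :=
  ⟨-x, fun σ => by rw [map_neg]; linear_combination -(hx σ)⟩

theorem conjField_decomp {F : Type*} [Field F] [NumberField F] {x : F}
    (hx : x ∈ conjField F) : ∃ a ∈ Fplus F, ∃ b ∈ Fminus F, a + b = x := by
  obtain ⟨y, hy⟩ := hx
  refine ⟨(x + y) / 2, fun σ => ?_, (x - y) / 2, fun σ => ?_, by ring⟩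
  · have h2 : σ 2 = 2 := map_ofNat σ 2
    have h3 : starRingEnd ℂ 2 = 2 := map_ofNat (starRingEnd ℂ) 2
    simp [hy, h2, h3, add_comm]
  · have h2 : σ 2 = 2 := map_ofNat σ 2
    have h3 : starRingEnd ℂ 2 = 2 := map_ofNat (starRingEnd ℂ) 2
    simp [hy, h2, h3, ← neg_div]

theorem Fminus_div {F : Type*} [Field F] [NumberField F] {b d : F}
    (hb : b ∈ Fminus F) (hd : d ∈ Fminus F) : b / d ∈ Fplus F := by
  intro σ
  have h1 := hb σ
  have h2 := hd σ
  rw [map_div₀, map_div₀, ← neg_div_neg_eq (starRingEnd ℂ (σ b)), ← h1, ← h2]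

/-- If `F⁻ ≠ {0}`, then `F⁺ + F⁻` is a subfield of `F` which is a CM field,
with maximal totally real subfield `F⁺`; in particular `F` admits a CM
subfield. -/
theorem Fplus_add_Fminus_isCM (F : Type*) [Field F] [NumberField F]
    (h : Fminus F ≠ ⊥) :
    ∃ K : Subfield F, (K : Set F) = ((Fplus F + Fminus F : Submodule ℚ F) : Set F) ∧
      IsCMField K ∧
      ∃ k : Subfield K,
        (fun x : K => (x : F)) '' (k : Set K) = (Fplus F : Set F) ∧
        IsTotallyRealField k ∧ Module.finrank k K = 2 ∧
        ∀ k' : Subfield K, IsTotallyRealField k' → k' ≤ k := by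
  obtain ⟨d, hd, hd0⟩ := (Submodule.ne_bot_iff _).1 h
  have : Algebra.IsAlgebraic ℚ (conjField F) :=
    Algebra.IsAlgebraic.tower_bot ℚ (conjField F) F
  have hreal : IsTotallyRealField (realIn F (conjField F)) := by
    intro σ x
    obtain ⟨τ, hτ⟩ := exists_lift_embedding _ σ
    obtain ⟨ρ, hρ⟩ := exists_lift_embedding _ τ
    rw [← hτ, ← hρ]
    exact Complex.conj_eq_iff_im.1 (x.2 ρ).symm
  let δ : conjField F := ⟨d, mem_conjField_of_Fminus hd⟩
  have hδ0 : δ ≠ 0 := fun h0 => hd0 (congrArg Subtype.val h0)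
  have him : ∀ σ : F →+* ℂ, (σ d).im ≠ 0 := by
    intro σ h0
    have h1 : σ d = 0 := by
      have h2 := hd σ
      rw [Complex.conj_eq_iff_im.2 h0] at h2
      linear_combination h2 / 2
    exact hd0 ((map_eq_zero σ).1 h1)
  have hrank : Module.finrank (realIn F (conjField F)) (conjField F) = 2 := by
    have hli : LinearIndependent (realIn F (conjField F)) ![(1 : conjField F), δ] := by
      rw [LinearIndependent.pair_iff]
      intro s t hst
      have ht : t = 0 := by
        by_contra ht
        have ht' : (t : conjField F) ≠ 0 := fun h0 => ht (Subtype.ext h0)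
        have e : δ = ((-s / t : realIn F (conjField F)) : conjField F) := by
          rw [Subfield.smul_def, Subfield.smul_def] at hst
          simp only [smul_eq_mul, mul_one] at hst
          push_cast
          rw [eq_div_iff ht']
          linear_combination hst
        obtain ⟨σ⟩ : Nonempty (F →+* ℂ) := inferInstance
        apply him σ
        have h3 := (-s / t : realIn F (conjField F)).2 σ
        rw [← e] at h3
        exact Complex.conj_eq_iff_im.1 h3.symm
      subst ht
      refine ⟨?_, rfl⟩
      rw [zero_smul, add_zero, Subfield.smul_def, smul_eq_mul, mul_one] at hst
      exact Subtype.ext hst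
    have hsp : ⊤ ≤ Submodule.span (realIn F (conjField F))
        (Set.range ![(1 : conjField F), δ]) := by
      rintro x -
      obtain ⟨a, ha, b, hb, hab⟩ := conjField_decomp x.2
      rw [Matrix.range_cons, Matrix.range_cons, Matrix.range_empty, Set.union_empty,
        Set.singleton_union, Submodule.mem_span_pair]
      refine ⟨⟨⟨a, mem_conjField_of_Fplus ha⟩, ha⟩,
        ⟨⟨b / d, mem_conjField_of_Fplus (Fminus_div hb hd)⟩, Fminus_div hb hd⟩, ?_⟩
      apply Subtype.ext
      change a * 1 + b / d * d = (x : F)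
      rw [div_mul_cancel₀ _ hd0, mul_one, hab]
    rw [Module.finrank_eq_card_basis (Module.Basis.mk hli hsp), Fintype.card_fin]
  refine ⟨conjField F, ?_, ⟨?_, _, hreal, hrank⟩, realIn F (conjField F), ?_, hreal, hrank, ?_⟩
  · ext x
    rw [SetLike.mem_coe, SetLike.mem_coe, Submodule.add_eq_sup, Submodule.mem_sup]
    constructor
    · exact conjField_decomp
    · rintro ⟨a, ha, b, hb, rfl⟩
      exact add_mem (mem_conjField_of_Fplus ha) (mem_conjField_of_Fminus hb)
  · intro σ
    obtain ⟨ρ, hρ⟩ := exists_lift_embedding _ σ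
    refine ⟨δ, ?_⟩
    rw [← hρ]
    exact him ρ
  · ext x
    constructor
    · rintro ⟨y, hy, rfl⟩
      exact hy
    · intro hx
      exact ⟨⟨x, mem_conjField_of_Fplus hx⟩, hx, rfl⟩
  · intro k' hk' x hx σ
    exact (Complex.conj_eq_iff_im.2
      (hk' ((σ.comp (conjField F).subtype).comp k'.subtype) ⟨x, hx⟩)).symm
end

section
/- Let F be a number field. Then F admits a CM subfield if and only if F⁻ ≠ {0}, and this holds if and only if dim_ℚ F⁺ = dim_ℚ F⁻. -/
/-- `F⁺` as a subfield. -/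
def FplusField (F : Type*) [Field F] : Subfield F where
  carrier := {x | ∀ σ : F →+* ℂ, σ x = starRingEnd ℂ (σ x)}
  mul_mem' := by
    intro a b ha hb σ
    rw [map_mul, map_mul, ← ha σ, ← hb σ]
  one_mem' := by intro σ; simp
  add_mem' := by
    intro a b ha hb σ
    rw [map_add, map_add, ← ha σ, ← hb σ]
  zero_mem' := by intro σ; simp
  neg_mem' := by
    intro a ha σ
    rw [map_neg, map_neg, ← ha σ]
  inv_mem' := by
    intro a ha σ
    rw [map_inv₀, map_inv₀, ← ha σ]

/-- The subfield of elements having a conjugate. -/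
def ConjField (F : Type*) [Field F] : Subfield F where
  carrier := {x | ∃ x' : F, ∀ σ : F →+* ℂ, σ x' = starRingEnd ℂ (σ x)}
  mul_mem' := by
    rintro a b ⟨a', ha⟩ ⟨b', hb⟩
    exact ⟨a' * b', fun σ => by rw [map_mul, map_mul, map_mul, ha σ, hb σ]⟩
  one_mem' := ⟨1, by intro σ; simp⟩
  add_mem' := by
    rintro a b ⟨a', ha⟩ ⟨b', hb⟩
    exact ⟨a' + b', fun σ => by rw [map_add, map_add, map_add, ha σ, hb σ]⟩
  zero_mem' := ⟨0, by intro σ; simp⟩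
  neg_mem' := by
    rintro a ⟨a', ha⟩
    exact ⟨-a', fun σ => by rw [map_neg, map_neg, map_neg, ha σ]⟩
  inv_mem' := by
    rintro a ⟨a', ha⟩
    exact ⟨a'⁻¹, fun σ => by rw [map_inv₀, map_inv₀, map_inv₀, ha σ]⟩

theorem isAlg_subfield (F : Type*) [Field F] [CharZero F] [Algebra.IsAlgebraic ℚ F]
    (K : Subfield F) : Algebra.IsAlgebraic K F :=
  Algebra.IsAlgebraic.tower_top (K := ℚ) K

theorem extend_emb (F : Type*) [Field F] [CharZero F] [Algebra.IsAlgebraic ℚ F]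
    (K : Subfield F) (σ : K →+* ℂ) : ∃ τ : F →+* ℂ, ∀ x : K, τ x = σ x := by
  have := isAlg_subfield F K
  exact ⟨NumberField.ComplexEmbedding.lift F σ, fun x =>
    NumberField.ComplexEmbedding.lift_algebraMap_apply F σ x⟩

theorem quad_gen {K : Type*} [Field K] [CharZero K] (k : Subfield K)
    (h : Module.finrank k K = 2) :
    ∃ α : K, α ^ 2 ∈ k ∧ α ≠ 0 ∧ ∀ z : K, ∃ c ∈ k, ∃ d ∈ k, z = c + d * α := by
  obtain ⟨x, hx⟩ : ∃ x : K, x ∉ k := by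
    by_contra! hc
    have : k = ⊤ := by ext z; simp [hc z]
    subst this
    have h1 : Module.finrank (⊤ : Subfield K) K ≤ 1 :=
      finrank_le_one (1 : K) (fun w => ⟨⟨w, trivial⟩, by simp [Subfield.smul_def]⟩)
    omega
  have hli : LinearIndependent k ![(1 : K), x] := by
    rw [LinearIndependent.pair_iff]
    intro s t hst
    simp only [Subfield.smul_def, smul_eq_mul, mul_one] at hst
    have ht : t = 0 := by
      by_contra ht
      have ht' : (t : K) ≠ 0 := by simpa using ht
      apply hx
      have : x = -(s : K) / t := by
        field_simp
        linear_combination hst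
      rw [this]
      exact k.div_mem (k.neg_mem s.2) t.2
    subst ht
    simpa using hst
  have : FiniteDimensional k K := FiniteDimensional.of_finrank_pos (by omega)
  have hspan := hli.span_eq_top_of_card_eq_finrank' (by simp [h])
  have key : ∀ z : K, ∃ c ∈ k, ∃ d ∈ k, z = c + d * x := by
    intro z
    have hz : z ∈ Submodule.span k (Set.range ![(1 : K), x]) := by rw [hspan]; trivial
    simp only [Matrix.range_cons, Matrix.range_empty, Set.union_empty,
      Set.singleton_union] at hz
    obtain ⟨c, d, hcd⟩ := Submodule.mem_span_pair.1 hz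
    exact ⟨c, c.2, d, d.2, by simp [← hcd, Subfield.smul_def]⟩
  obtain ⟨a, ha, b, hb, hab⟩ := key (x ^ 2)
  have h2 : (2 : K) ∈ k := by exact_mod_cast natCast_mem k 2
  have hb2 : b / 2 ∈ k := k.div_mem hb h2
  refine ⟨x - b / 2, ?_, ?_, ?_⟩
  · have : (x - b / 2) ^ 2 = a + (b / 2) ^ 2 := by linear_combination hab
    rw [this]
    exact k.add_mem ha (k.pow_mem hb2 2)
  · intro h0
    exact hx (by rw [sub_eq_zero.1 h0]; exact hb2)
  · intro z
    obtain ⟨c, hc, d, hd, hz⟩ := key z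
    exact ⟨c + d * (b / 2), k.add_mem hc (k.mul_mem hd hb2), d, hd, by rw [hz]; ring⟩

theorem CM_to_minus (F : Type*) [Field F] [NumberField F] (K : Subfield F)
    (hK : IsCMField K) : Fminus F ≠ ⊥ := by
  obtain ⟨h1, k, hk, h2⟩ := hK
  obtain ⟨α, hα2, hα0, hα⟩ := quad_gen k h2
  have hmem : (α : F) ∈ Fminus F := by
    intro σ
    let τ : K →+* ℂ := σ.comp K.subtype
    have hreal : ∀ c ∈ k, (τ c).im = 0 := fun c hc => hk (τ.comp k.subtype) ⟨c, hc⟩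
    have hτ : σ (α : F) = τ α := rfl
    rw [hτ]
    have him : (τ α).im ≠ 0 := by
      intro h0
      obtain ⟨x, hx⟩ := h1 τ
      obtain ⟨c, hc, d, hd, rfl⟩ := hα x
      apply hx
      simp [hreal c hc, hreal d hd, h0]
    have hsq := hreal _ hα2
    rw [map_pow, pow_two, Complex.mul_im] at hsq
    have hre : (τ α).re = 0 := by
      have : (τ α).re * (τ α).im = 0 := by linarith
      exact (mul_eq_zero.1 this).resolve_right him
    apply Complex.ext <;> simp [hre]
  intro hbot
  rw [hbot, Submodule.mem_bot] at hmem
  exact hα0 (by exact_mod_cast hmem)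

theorem minus_to_CM (F : Type*) [Field F] [NumberField F] (y : F)
    (hy : y ∈ Fminus F) (hy0 : y ≠ 0) : IsCMField (ConjField F) := by
  have hy' : ∀ σ : F →+* ℂ, σ y = - starRingEnd ℂ (σ y) := hy
  have hyK : y ∈ ConjField F := ⟨-y, fun σ => by rw [map_neg]; linear_combination -(hy' σ)⟩
  have hne : Nonempty (F →+* ℂ) := inferInstance
  have hnr : ∀ σ : F →+* ℂ, (σ y).im ≠ 0 := by
    intro σ h0
    have h1 := congrArg Complex.re (hy' σ)
    simp at h1
    have : σ y = 0 := Complex.ext (by simp; linarith) (by simpa using h0)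
    exact hy0 (by simpa using this)
  let k : Subfield (ConjField F) := (FplusField F).comap (ConjField F).subtype
  have hkmem : ∀ x : ConjField F, x ∈ k ↔ ∀ σ : F →+* ℂ, σ x = starRingEnd ℂ (σ x) :=
    fun x => Iff.rfl
  have : Algebra.IsAlgebraic ℚ (ConjField F) := inferInstance
  refine ⟨?_, k, ?_, ?_⟩
  · intro σ
    obtain ⟨τ, hτ⟩ := extend_emb F _ σ
    exact ⟨⟨y, hyK⟩, by rw [← hτ]; exact hnr τ⟩
  · intro σ x
    obtain ⟨τ, hτ⟩ := extend_emb _ k σ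
    obtain ⟨ρ, hρ⟩ := extend_emb F _ τ
    rw [← hτ, ← hρ]
    exact Complex.conj_eq_iff_im.1 ((hkmem x).1 x.2 ρ).symm
  · let Y : ConjField F := ⟨y, hyK⟩
    have hY0 : Y ≠ 0 := fun h => hy0 (congrArg Subtype.val h)
    have hYk : Y ∉ k := by
      intro h
      obtain ⟨σ⟩ := hne
      exact hnr σ (Complex.conj_eq_iff_im.1 ((hkmem _).1 h σ).symm)
    let f : (k × k) →ₗ[k] ConjField F :=
      (LinearMap.toSpanSingleton k _ (1 : ConjField F)).coprod
        (LinearMap.toSpanSingleton k _ Y)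
    have hf : ∀ a b : k, f (a, b) = a + b * Y := by
      intro a b
      simp [f, Subfield.smul_def]
    have hbij : Function.Bijective f := by
      constructor
      · rw [injective_iff_map_eq_zero]
        rintro ⟨a, b⟩ hab
        rw [hf] at hab
        have hb : b = 0 := by
          by_contra hb
          have hb' : (b : ConjField F) ≠ 0 := by simpa using hb
          apply hYk
          have : Y = -(a : ConjField F) / b := by
            field_simp
            linear_combination hab
          rw [this]
          exact k.div_mem (k.neg_mem a.2) b.2
        subst hb
        simpa using hab
      · intro x
        obtain ⟨x', hx'⟩ := x.2
        have hx'K : x' ∈ ConjField F := ⟨x, fun σ => by rw [hx' σ]; simp⟩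
        let X : ConjField F := ⟨x', hx'K⟩
        have ha : (x + X) / 2 ∈ k := by
          rw [hkmem]
          intro σ
          have e : (((x + X) / 2 : ConjField F) : F) = ((x : F) + x') / 2 := rfl
          rw [e]
          simp only [map_div₀, map_add, hx' σ, Complex.conj_conj, map_ofNat, add_comm]
        have hb : (x - X) / (2 * Y) ∈ k := by
          rw [hkmem]
          intro σ
          have e : (((x - X) / (2 * Y) : ConjField F) : F) = ((x : F) - x') / (2 * y) := rfl
          have h3 : starRingEnd ℂ (σ y) = - σ y := by linear_combination hy' σ
          rw [e]
          simp only [map_div₀, map_sub, map_mul, hx' σ, h3, Complex.conj_conj, map_ofNat]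
          rw [mul_neg, div_neg, ← neg_div, neg_sub]
        refine ⟨(⟨_, ha⟩, ⟨_, hb⟩), ?_⟩
        rw [hf]
        simp only
        field_simp
        ring
    rw [← (LinearEquiv.ofBijective f hbij).finrank_eq]
    simp

theorem minus_finrank (F : Type*) [Field F] [NumberField F] (y : F)
    (hy : y ∈ Fminus F) (hy0 : y ≠ 0) :
    Module.finrank ℚ (Fplus F) = Module.finrank ℚ (Fminus F) := by
  have hy' : ∀ σ : F →+* ℂ, starRingEnd ℂ (σ y) = - σ y := fun σ => by
    have h : σ y = - starRingEnd ℂ (σ y) := hy σ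
    linear_combination h
  have hmap : (Fplus F).map (LinearMap.mulLeft ℚ y) = Fminus F := by
    ext x
    constructor
    · rintro ⟨z, hz, rfl⟩ σ
      have hz' : σ z = starRingEnd ℂ (σ z) := hz σ
      simp only [LinearMap.mulLeft_apply, map_mul, hy', ← hz']
      ring
    · intro hx
      refine ⟨x / y, ?_, by simp; field_simp⟩
      intro σ
      have hx' : starRingEnd ℂ (σ x) = - σ x := by
        have h : σ x = - starRingEnd ℂ (σ x) := hx σ
        linear_combination h
      simp only [map_div₀, hy', hx', neg_div_neg_eq]
  rw [← hmap]
  exact (Submodule.equivMapOfInjective (LinearMap.mulLeft ℚ y)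
    (mul_right_injective₀ hy0) (Fplus F)).finrank_eq

theorem exists_CM_subfield_iff (F : Type*) [Field F] [NumberField F] :
    ((∃ K : Subfield F, IsCMField K) ↔ Fminus F ≠ ⊥) ∧
    (Fminus F ≠ ⊥ ↔ Module.finrank ℚ (Fplus F) = Module.finrank ℚ (Fminus F)) := by
  refine ⟨⟨fun ⟨K, hK⟩ => CM_to_minus F K hK, fun h => ?_⟩, fun h => ?_, fun h hbot => ?_⟩
  · obtain ⟨y, hy, hy0⟩ := Submodule.exists_mem_ne_zero_of_ne_bot h
    exact ⟨_, minus_to_CM F y hy hy0⟩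
  · obtain ⟨y, hy, hy0⟩ := Submodule.exists_mem_ne_zero_of_ne_bot h
    exact minus_finrank F y hy hy0
  · rw [hbot, finrank_bot, Submodule.finrank_eq_zero] at h
    have h1 : (1 : F) ∈ Fplus F := fun σ => by simp
    rw [h, Submodule.mem_bot] at h1
    exact one_ne_zero h1
end

section
/- Let F be a number field with F⁻ ≠ {0}. Then every CM subfield K of F satisfies K ⊆ F⁺ + F⁻; hence F⁺ + F⁻ is the maximal CM subfield of F. -/
theorem aux_quad (K : Type*) [Field K] [CharZero K] (k : Subfield K)
    (hk : Module.finrank k K = 2) :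
    ∃ y : K, y ^ 2 ∈ k ∧ ∀ z : K, ∃ p ∈ k, ∃ q ∈ k, z = p + q * y := by
  have hx : ∃ x : K, x ∉ k := by
    by_contra hcon
    push Not at hcon
    have h1 : Module.finrank k K ≤ 1 := by
      refine finrank_le_one (1 : K) fun w => ⟨⟨w, hcon w⟩, ?_⟩
      simp [Subfield.smul_def]
    omega
  obtain ⟨x, hx⟩ := hx
  have hli : LinearIndependent k ![(1 : K), x] := by
    rw [LinearIndependent.pair_iff]
    intro s t hst
    simp only [Subfield.smul_def, smul_eq_mul, mul_one] at hst
    have ht : t = 0 := by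
      by_contra ht
      have ht' : (t : K) ≠ 0 := by simpa using ht
      apply hx
      have : x = ((-s / t : k) : K) := by
        push_cast
        field_simp
        linear_combination hst
      rw [this]
      exact SetLike.coe_mem _
    subst ht
    simpa using hst
  have hspan : ∀ z : K, ∃ p ∈ k, ∃ q ∈ k, z = p + q * x := by
    intro z
    have htop := hli.span_eq_top_of_card_eq_finrank (by simp [hk])
    have hz : z ∈ Submodule.span k (Set.range ![(1 : K), x]) := htop ▸ Submodule.mem_top
    simp only [Matrix.range_cons, Matrix.range_empty, Set.union_empty,
      Set.singleton_union] at hz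
    obtain ⟨p, q, hpq⟩ := Submodule.mem_span_pair.1 hz
    refine ⟨p, p.2, q, q.2, ?_⟩
    simpa [Subfield.smul_def] using hpq.symm
  obtain ⟨a, ha, b, hb, hab⟩ := hspan (x ^ 2)
  have h2 : (2 : K) ∈ k := ofNat_mem k 2
  refine ⟨x - b / 2, ?_, ?_⟩
  · have : (x - b / 2) ^ 2 = a + b ^ 2 / 2 ^ 2 := by
      linear_combination hab
    rw [this]
    exact add_mem ha (div_mem (pow_mem hb _) (pow_mem h2 _))
  · intro z
    obtain ⟨p, hp, q, hq, rfl⟩ := hspan z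
    refine ⟨p + q * (b / 2), add_mem hp (mul_mem hq (div_mem hb h2)), q, hq, ?_⟩
    ring

theorem aux_two1 {F : Type*} [Field F] (σ : F →+* ℂ) : σ 2 = 2 := map_ofNat σ 2

theorem aux_two2 : starRingEnd ℂ 2 = 2 := map_ofNat (starRingEnd ℂ) 2

theorem aux_mem_iff (F : Type*) [Field F] [NumberField F] (x : F) :
    x ∈ Fplus F + Fminus F ↔ ∃ x' : F, ∀ σ : F →+* ℂ, σ x' = starRingEnd ℂ (σ x) := by
  rw [Submodule.add_eq_sup, Submodule.mem_sup]
  constructor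
  · rintro ⟨p, hp, m, hm, rfl⟩
    refine ⟨p - m, fun σ => ?_⟩
    have h1 : σ p = _ := hp σ
    have h2 : σ m = _ := hm σ
    rw [map_sub, map_add, map_add]
    linear_combination h1 - h2
  · rintro ⟨x', hx'⟩
    refine ⟨(x + x') / 2, fun σ => ?_, (x - x') / 2, fun σ => ?_, by ring⟩
    · simp [aux_two1 σ, aux_two2, hx', add_comm]
    · simp [aux_two1 σ, aux_two2, hx']
      ring

theorem aux_part1 (F : Type*) [Field F] [NumberField F] (K : Subfield F) (hK : IsCMField K) :
    (K : Set F) ⊆ ((Fplus F + Fminus F : Submodule ℚ F) : Set F) := by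
  obtain ⟨him, k, hreal, hk⟩ := hK
  obtain ⟨y, hy, hspan⟩ := aux_quad K k hk
  have hr : ∀ (σ : F →+* ℂ) (p : K), p ∈ k → (σ p).im = 0 := fun σ p hp =>
    hreal ((σ.comp K.subtype).comp k.subtype) ⟨p, hp⟩
  have hyim : ∀ σ : F →+* ℂ, (σ y).re = 0 := by
    intro σ
    have h1 := hr σ _ hy
    have h2 : (σ y).im ≠ 0 := by
      intro h0
      obtain ⟨z, hz⟩ := him (σ.comp K.subtype)
      obtain ⟨p, hp, q, hq, rfl⟩ := hspan z
      apply hz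
      simp [hr σ p hp, hr σ q hq, h0]
    simp [pow_two] at h1
    grind
  intro z hz
  obtain ⟨p, hp, q, hq, hpq⟩ := hspan ⟨z, hz⟩
  have hz' : z = p + q * y := congrArg Subtype.val hpq
  refine (aux_mem_iff F z).2 ⟨p - q * y, fun σ => ?_⟩
  rw [hz']
  apply Complex.ext <;> simp [hr σ p hp, hr σ q hq, hyim σ]

/-- the field `F⁺ + F⁻` -/
def auxMax (F : Type*) [Field F] [NumberField F] : Subfield F where
  carrier := {x | ∃ x' : F, ∀ σ : F →+* ℂ, σ x' = starRingEnd ℂ (σ x)}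
  zero_mem' := ⟨0, by simp⟩
  one_mem' := ⟨1, by simp⟩
  add_mem' := by
    rintro a b ⟨a', ha⟩ ⟨b', hb⟩
    exact ⟨a' + b', fun σ => by simp [ha, hb]⟩
  mul_mem' := by
    rintro a b ⟨a', ha⟩ ⟨b', hb⟩
    exact ⟨a' * b', fun σ => by simp [ha, hb]⟩
  neg_mem' := by
    rintro a ⟨a', ha⟩
    exact ⟨-a', fun σ => by simp [ha]⟩
  inv_mem' := by
    rintro a ⟨a', ha⟩
    exact ⟨a'⁻¹, fun σ => by simp [ha]⟩

/-- the field `F⁺` inside `F⁺ + F⁻` -/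
def auxReal (F : Type*) [Field F] [NumberField F] : Subfield (auxMax F) where
  carrier := {x | ∀ σ : F →+* ℂ, σ x = starRingEnd ℂ (σ x)}
  zero_mem' := by simp
  one_mem' := by simp
  add_mem' := by
    intro a b ha hb σ
    simp [← ha σ, ← hb σ]
  mul_mem' := by
    intro a b ha hb σ
    simp [← ha σ, ← hb σ]
  neg_mem' := by
    intro a ha σ
    simp [← ha σ]
  inv_mem' := by
    intro a ha σ
    simp [← ha σ]

theorem aux_ext (F : Type*) [Field F] [NumberField F] (K : Subfield F) (τ : K →+* ℂ) :
    ∃ σ : F →+* ℂ, ∀ x : K, σ x = τ x := by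
  have : Algebra.IsAlgebraic K F := Algebra.IsAlgebraic.tower_top (K := ℚ) K
  exact ⟨NumberField.ComplexEmbedding.lift F τ,
    fun x => NumberField.ComplexEmbedding.lift_algebraMap_apply F τ x⟩

theorem aux_cm (F : Type*) [Field F] [NumberField F] (h : Fminus F ≠ ⊥) :
    IsCMField (auxMax F) := by
  obtain ⟨a, ha, ha0⟩ := Submodule.exists_mem_ne_zero_of_ne_bot h
  have ha' : ∀ σ : F →+* ℂ, σ a = - starRingEnd ℂ (σ a) := ha
  have hre : ∀ σ : F →+* ℂ, (σ a).re = 0 := fun σ => by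
    have := congrArg Complex.re (ha' σ)
    simp at this
    linarith
  have him : ∀ σ : F →+* ℂ, (σ a).im ≠ 0 := fun σ h0 => by
    have : σ a = 0 := Complex.ext (hre σ) h0
    exact ha0 (by simpa using this)
  have haM : a ∈ auxMax F := ⟨-a, fun σ => by rw [map_neg]; linear_combination -ha' σ⟩
  refine ⟨fun τ => ?_, auxReal F, fun τ x => ?_, ?_⟩
  · obtain ⟨σ, hσ⟩ := aux_ext F _ τ
    exact ⟨⟨a, haM⟩, by rw [← hσ]; exact him σ⟩
  · obtain ⟨ρ, hρ⟩ := aux_ext (auxMax F) _ τ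
    obtain ⟨σ, hσ⟩ := aux_ext F _ ρ
    rw [← hρ, ← hσ]
    exact Complex.conj_eq_iff_im.1 (x.2 σ).symm
  · have hli : LinearIndependent (auxReal F) ![(1 : auxMax F), ⟨a, haM⟩] := by
      rw [LinearIndependent.pair_iff]
      intro s t hst
      simp only [Subfield.smul_def, smul_eq_mul, mul_one] at hst
      have hst' : ((s : auxMax F) : F) + ((t : auxMax F) : F) * a = 0 :=
        congrArg Subtype.val hst
      have ht : t = 0 := by
        obtain ⟨σ⟩ : Nonempty (F →+* ℂ) := inferInstance
        have hs2 := Complex.conj_eq_iff_im.1 (s.2 σ).symm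
        have ht2 := Complex.conj_eq_iff_im.1 (t.2 σ).symm
        have h3 := congrArg (fun z => (σ z).im) hst'
        simp [hs2, ht2, him σ] at h3
        have h4 : σ ((t : auxMax F) : F) = 0 := Complex.ext h3 ht2
        simpa using h4
      subst ht
      simpa using hst
    have hsp : ⊤ ≤ Submodule.span (auxReal F) (Set.range ![(1 : auxMax F), ⟨a, haM⟩]) := by
      rintro ⟨z, z', hz⟩ -
      simp only [Matrix.range_cons, Matrix.range_empty, Set.union_empty,
        Set.singleton_union]
      have h1 : ∀ σ : F →+* ℂ, σ ((z + z') / 2) = starRingEnd ℂ (σ ((z + z') / 2)) := by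
        intro σ
        simp [aux_two1 σ, aux_two2, hz, add_comm]
      have h2 : ∀ σ : F →+* ℂ,
          σ ((z - z') / 2 / a) = starRingEnd ℂ (σ ((z - z') / 2 / a)) := by
        intro σ
        have h5 : starRingEnd ℂ (σ a) = - σ a := (neg_eq_iff_eq_neg.2 (ha' σ)).symm
        simp [aux_two1 σ, aux_two2, hz, h5]
        ring
      refine Submodule.mem_span_pair.2
        ⟨⟨⟨_, _, fun σ => h1 σ⟩, h1⟩, ⟨⟨_, _, fun σ => h2 σ⟩, h2⟩, ?_⟩
      apply Subtype.ext
      simp only [Subfield.smul_def, smul_eq_mul, mul_one]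
      change (z + z') / 2 + (z - z') / 2 / a * a = z
      field_simp
      ring
    rw [Module.finrank_eq_card_basis (Module.Basis.mk hli hsp)]
    simp

/-- If `F⁻ ≠ {0}` then every CM subfield `K` of `F` satisfies
`K ⊆ F⁺ + F⁻`; hence `F⁺ + F⁻` is the maximal CM subfield of `F`. -/
theorem Fplus_add_Fminus_maximal_CM (F : Type*) [Field F] [NumberField F]
    (h : Fminus F ≠ ⊥) :
    (∀ K : Subfield F, IsCMField K →
      (K : Set F) ⊆ ((Fplus F + Fminus F : Submodule ℚ F) : Set F)) ∧
    ∃ Kmax : Subfield F,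
      (Kmax : Set F) = ((Fplus F + Fminus F : Submodule ℚ F) : Set F) ∧
      IsCMField Kmax ∧ ∀ K : Subfield F, IsCMField K → K ≤ Kmax := by
  have hset : (auxMax F : Set F) = ((Fplus F + Fminus F : Submodule ℚ F) : Set F) := by
    ext x
    exact (aux_mem_iff F x).symm
  refine ⟨fun K hK => aux_part1 F K hK, auxMax F, hset, aux_cm F h, fun K hK x hx => ?_⟩
  have := aux_part1 F K hK hx
  rw [← hset] at this
  exact this
end

section
/- Let F be a number field with F⁻ ≠ {0}. Then there exists a ∈ F⁻ whose minimal polynomial over ℚ has degree 2 · dim_ℚ F⁻, and for any such a one has ℚ(a) = F⁺ + F⁻. -/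
theorem Fm_mul {F : Type*} [Field F] [NumberField F] {x y : F}
    (hx : x ∈ Fminus F) (hy : y ∈ Fminus F) : x * y ∈ Fplus F := by
  intro σ
  have h1 := hx σ
  have h2 := hy σ
  rw [map_mul, map_mul]
  linear_combination (σ y) * h1 - (starRingEnd ℂ (σ x)) * h2

theorem Fp_mul {F : Type*} [Field F] [NumberField F] {x y : F}
    (hx : x ∈ Fplus F) (hy : y ∈ Fplus F) : x * y ∈ Fplus F := by
  intro σ
  have h1 := hx σ
  have h2 := hy σ
  rw [map_mul, map_mul]
  linear_combination (σ y) * h1 + (starRingEnd ℂ (σ x)) * h2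

theorem Fpm_mul {F : Type*} [Field F] [NumberField F] {x y : F}
    (hx : x ∈ Fplus F) (hy : y ∈ Fminus F) : x * y ∈ Fminus F := by
  intro σ
  have h1 := hx σ
  have h2 := hy σ
  rw [map_mul, map_mul]
  linear_combination (σ y) * h1 + (starRingEnd ℂ (σ x)) * h2

theorem Fm_inv {F : Type*} [Field F] [NumberField F] {x : F}
    (hx : x ∈ Fminus F) : x⁻¹ ∈ Fminus F := by
  intro σ
  have h1 := hx σ
  rw [map_inv₀, map_inv₀, ← inv_neg, ← h1]

theorem Fpm_disj (F : Type*) [Field F] [NumberField F] : Fplus F ⊓ Fminus F = ⊥ := by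
  rw [eq_bot_iff]
  rintro x ⟨h1, h2⟩
  obtain ⟨σ⟩ : Nonempty (F →+* ℂ) := inferInstance
  have h1 := h1 σ
  have h2 := h2 σ
  have : σ x = 0 := by linear_combination (h1 + h2) / 2
  simpa using this

theorem Fp_finrank {F : Type*} [Field F] [NumberField F] {e : F} (he : e ∈ Fminus F)
    (he0 : e ≠ 0) : Module.finrank ℚ (Fplus F) = Module.finrank ℚ (Fminus F) := by
  have inj (c : F) (hc : c ≠ 0) : Function.Injective (LinearMap.mulLeft ℚ c) :=
    fun x y hxy => mul_left_cancel₀ hc hxy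
  apply le_antisymm
  · have := (Submodule.equivMapOfInjective _ (inj e he0) (Fplus F)).finrank_eq
    rw [this]
    apply Submodule.finrank_mono
    rintro _ ⟨x, hx, rfl⟩
    simpa [mul_comm] using Fpm_mul hx he
  · have := (Submodule.equivMapOfInjective _ (inj e he0) (Fminus F)).finrank_eq
    rw [this]
    apply Submodule.finrank_mono
    rintro _ ⟨x, hx, rfl⟩
    exact Fm_mul he hx

/-- `F⁺ + F⁻` as a subalgebra. -/
def Fsub (F : Type*) [Field F] [NumberField F] : Subalgebra ℚ F where
  carrier := ((Fplus F + Fminus F : Submodule ℚ F) : Set F)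
  add_mem' := fun ha hb => Submodule.add_mem _ ha hb
  mul_mem' := by
    intro a b ha hb
    obtain ⟨p, hp, m, hm, rfl⟩ := Submodule.mem_sup.1 ha
    obtain ⟨q, hq, n, hn, rfl⟩ := Submodule.mem_sup.1 hb
    refine Submodule.mem_sup.2 ⟨p * q + m * n, Submodule.add_mem _ (Fp_mul hp hq) (Fm_mul hm hn),
      p * n + q * m, Submodule.add_mem _ (Fpm_mul hp hn) (Fpm_mul hq hm), by ring⟩
  algebraMap_mem' := by
    intro r
    refine Submodule.mem_sup_left ?_
    intro σ
    simp

/-- `F⁺ + F⁻` as an intermediate field. -/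
def Fint (F : Type*) [Field F] [NumberField F] : IntermediateField ℚ F :=
  (Fsub F).toIntermediateField fun x hx => (Fsub F).inv_mem_of_algebraic
    (Algebra.IsAlgebraic.isAlgebraic ((⟨x, hx⟩ : Fsub F) : F))

theorem Fint_finrank {F : Type*} [Field F] [NumberField F] {e : F} (he : e ∈ Fminus F)
    (he0 : e ≠ 0) : Module.finrank ℚ (Fint F) = 2 * Module.finrank ℚ (Fminus F) := by
  have h := Submodule.finrank_sup_add_finrank_inf_eq (Fplus F) (Fminus F)
  rw [Fpm_disj, finrank_bot, Fp_finrank he he0] at h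
  have h2 : Module.finrank ℚ (Fint F) = Module.finrank ℚ (Fplus F ⊔ Fminus F : Submodule ℚ F) := rfl
  omega

theorem Fint_minus {F : Type*} [Field F] [NumberField F] {x : F} (hx : x ∈ Fminus F) :
    x ∈ Fint F :=
  (Submodule.mem_sup_right hx : x ∈ Fplus F ⊔ Fminus F)

theorem Fint_plus {F : Type*} [Field F] [NumberField F] {x : F} (hx : x ∈ Fplus F) :
    x ∈ Fint F :=
  (Submodule.mem_sup_left hx : x ∈ Fplus F ⊔ Fminus F)

theorem Fint_hom_ext {F : Type*} [Field F] [NumberField F] {e : F} (he : e ∈ Fminus F)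
    (he0 : e ≠ 0) (φ ψ : Fint F →ₐ[ℚ] ℂ)
    (H : ∀ x (hx : x ∈ Fminus F), φ ⟨x, Fint_minus hx⟩ = ψ ⟨x, Fint_minus hx⟩) : φ = ψ := by
  ext ⟨x, hx⟩
  obtain ⟨p, hp, m, hm, rfl⟩ := Submodule.mem_sup.1 (show x ∈ Fplus F ⊔ Fminus F from hx)
  have key : (⟨p + m, hx⟩ : Fint F) = ⟨p * e, Fint_minus (Fpm_mul hp he)⟩ *
      ⟨e⁻¹, Fint_minus (Fm_inv he)⟩ + ⟨m, Fint_minus hm⟩ := by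
    apply Subtype.ext
    change p + m = p * e * e⁻¹ + m
    field_simp
  rw [key, map_add, map_add, map_mul, map_mul, H _ (Fpm_mul hp he), H _ (Fm_inv he), H _ hm]

theorem exists_gen {F : Type*} [Field F] [NumberField F] {e : F} (he : e ∈ Fminus F)
    (he0 : e ≠ 0) : ∃ a, ∃ ha : a ∈ Fminus F,
      ∀ φ ψ : Fint F →ₐ[ℚ] ℂ, φ ⟨a, Fint_minus ha⟩ = ψ ⟨a, Fint_minus ha⟩ → φ = ψ := by
  let i : Fminus F →ₗ[ℚ] Fint F :=
    { toFun := fun x => ⟨x.1, Fint_minus x.2⟩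
      map_add' := fun _ _ => rfl
      map_smul' := fun _ _ => rfl }
  let P : {p : (Fint F →ₐ[ℚ] ℂ) × (Fint F →ₐ[ℚ] ℂ) // p.1 ≠ p.2} → Submodule ℚ (Fminus F) :=
    fun p => LinearMap.ker ((p.1.1.toLinearMap - p.1.2.toLinearMap).comp i)
  by_contra! hcon
  have hcov : ⋃ p, (P p : Set (Fminus F)) = Set.univ := by
    rw [Set.eq_univ_iff_forall]
    rintro ⟨a, ha⟩
    obtain ⟨φ, ψ, h1, h2⟩ := hcon a ha
    refine Set.mem_iUnion.2 ⟨⟨(φ, ψ), h2⟩, ?_⟩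
    exact LinearMap.mem_ker.2 (sub_eq_zero.2 h1)
  obtain ⟨⟨⟨φ, ψ⟩, hne⟩, hp⟩ := Subspace.exists_eq_top_of_iUnion_eq_univ hcov
  refine hne (Fint_hom_ext he he0 φ ψ fun x hx => ?_)
  have : (⟨x, hx⟩ : Fminus F) ∈ P ⟨⟨φ, ψ⟩, hne⟩ := by rw [hp]; trivial
  exact sub_eq_zero.1 (LinearMap.mem_ker.1 this)

/-- If `F⁻ ≠ {0}`, then there exists `a ∈ F⁻` whose minimal polynomial over
`ℚ` has degree `2 ⬝ dim_ℚ F⁻`, and for any such `a`, the subfield `ℚ(a)`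
generated by `a` equals `F⁺ + F⁻`. -/
theorem Fminus_generator_of_CM_subfield (F : Type*) [Field F] [NumberField F]
    (h : Fminus F ≠ ⊥) :
    (∃ a ∈ Fminus F,
      (minpoly ℚ a).natDegree = 2 * Module.finrank ℚ (Fminus F)) ∧
    ∀ a ∈ Fminus F,
      (minpoly ℚ a).natDegree = 2 * Module.finrank ℚ (Fminus F) →
      (Subfield.closure {a} : Set F) =
        ((Fplus F + Fminus F : Submodule ℚ F) : Set F) := by
  obtain ⟨e, he, he0⟩ := (Submodule.ne_bot_iff _).1 h
  refine ⟨?_, ?_⟩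
  · obtain ⟨a, ha, H⟩ := exists_gen he he0
    refine ⟨a, ha, ?_⟩
    have := (Field.primitive_element_iff_algHom_eq_of_eval' ℚ ℂ
      (fun x => IsAlgClosed.splits _) (⟨a, Fint_minus ha⟩ : Fint F)).2 (fun φ ψ => H φ ψ)
    rw [Field.primitive_element_iff_minpoly_natDegree_eq] at this
    rw [← Fint_finrank he he0, ← this]
    congr 1
    exact minpoly.algebraMap_eq (A := ℚ) (B := Fint F) (B' := F)
      Subtype.val_injective ⟨a, Fint_minus ha⟩
  · intro a ha hd
    have h1 : IntermediateField.adjoin ℚ {a} = Fint F := by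
      apply IntermediateField.eq_of_le_of_finrank_eq
      · rw [IntermediateField.adjoin_simple_le_iff]
        exact Fint_minus ha
      · rw [Fint_finrank he he0, ← hd,
          IntermediateField.adjoin.finrank (Algebra.IsIntegral.isIntegral a)]
    have h2 : (IntermediateField.adjoin ℚ {a}).toSubfield = Subfield.closure {a} := by
      rw [IntermediateField.adjoin_toSubfield]
      apply le_antisymm
      · rw [Subfield.closure_le]
        rintro x (⟨q, rfl⟩ | hx)
        · simp
        · exact Subfield.subset_closure hx
      · exact Subfield.closure_mono Set.subset_union_right
    rw [← h2, h1]
    rfl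
end

section
/- Let P ∈ ℚ[X] be monic and irreducible, let F = ℚ[X]/(P(X)), let α ∈ ℂ be a root of P, and let Q(X,Y) ∈ ℚ[X,Y] be such that Q (viewed as a polynomial in Y over F) is monic, irreducible over F and divides P(Y) over F, and such that Q(α, conj(α)) = 0. Then for every polynomial a ∈ ℚ[X]: a(α) = −conj(a(α)) if and only if a(X) + a(Y) belongs to the ideal of ℚ[X,Y] generated by P(X) and Q(X,Y). -/
theorem coprime_aux (P : Polynomial ℚ) (hPirr : Irreducible P)
    (f g : Polynomial (AdjoinRoot P)) (hf : Irreducible f) (h : ¬ f ∣ g) : IsCoprime f g := by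
  have : Fact (Irreducible P) := ⟨hPirr⟩
  exact (EuclideanDomain.dvd_or_coprime f g hf).resolve_left h

theorem congr_psi (P : Polynomial ℚ) (α : ℂ) (hα : Polynomial.aeval α P = 0) (β : ℂ)
    (R : MvPolynomial (Fin 2) ℚ) :
    Polynomial.eval₂RingHom (AdjoinRoot.lift (algebraMap ℚ ℂ) α hα) β
      (MvPolynomial.aeval ![Polynomial.C (AdjoinRoot.root P), Polynomial.X] R) =
    MvPolynomial.aeval ![α, β] R := by
  have : (Polynomial.eval₂RingHom (AdjoinRoot.lift (algebraMap ℚ ℂ) α hα) β).comp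
      (MvPolynomial.aeval (R := ℚ)
        ![Polynomial.C (AdjoinRoot.root P), Polynomial.X]).toRingHom =
      (MvPolynomial.aeval (R := ℚ) ![α, β]).toRingHom := by
    apply MvPolynomial.ringHom_ext'
    · exact Subsingleton.elim _ _
    · intro i
      fin_cases i
      · simp
        exact AdjoinRoot.lift_root (f := P) hα
      · simp
  exact RingHom.congr_fun this R

theorem congr_theta (P : Polynomial ℚ) (I : Ideal (MvPolynomial (Fin 2) ℚ))
    (hI : Polynomial.aeval (MvPolynomial.X (0 : Fin 2)) P ∈ I) :
    ∃ θ : Polynomial (AdjoinRoot P) →+* MvPolynomial (Fin 2) ℚ ⧸ I, ∀ R,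
      θ (MvPolynomial.aeval ![Polynomial.C (AdjoinRoot.root P), Polynomial.X] R) =
        Ideal.Quotient.mk I R := by
  have h0 : P.eval₂ ((Ideal.Quotient.mk I).comp (algebraMap ℚ (MvPolynomial (Fin 2) ℚ)))
      (Ideal.Quotient.mk I (MvPolynomial.X 0)) = 0 := by
    rw [← Polynomial.hom_eval₂]
    exact Ideal.Quotient.eq_zero_iff_mem.2 hI
  refine ⟨Polynomial.eval₂RingHom (AdjoinRoot.lift _ _ h0)
    (Ideal.Quotient.mk I (MvPolynomial.X 1)), fun R => ?_⟩
  have : (Polynomial.eval₂RingHom (AdjoinRoot.lift _ _ h0)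
      (Ideal.Quotient.mk I (MvPolynomial.X 1))).comp
      (MvPolynomial.aeval (R := ℚ)
        ![Polynomial.C (AdjoinRoot.root P), Polynomial.X]).toRingHom =
      Ideal.Quotient.mk I := by
    apply MvPolynomial.ringHom_ext'
    · exact Subsingleton.elim _ _
    · intro i
      fin_cases i <;> simp
  exact RingHom.congr_fun this R

/-- Let `P ∈ ℚ[X]` be monic irreducible, `F = ℚ[X]/(P)`, `α ∈ ℂ` a root of
`P`, and `Q ∈ ℚ[X,Y]` such that `Q`, viewed as a polynomial in `Y` over `F`,
is monic, irreducible and divides `P(Y)`, and such that `Q(α, conj α) = 0`.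
Then for every `a ∈ ℚ[X]`: `a(α) = −conj(a(α))` iff `a(X) + a(Y)` lies in
the ideal of `ℚ[X,Y]` generated by `P(X)` and `Q(X,Y)`.
Here `ℚ[X,Y]` is `MvPolynomial (Fin 2) ℚ`, with `X`, `Y` the two variables,
and `F[Y]` is `Polynomial (AdjoinRoot P)`. -/
theorem aeval_neg_conj_iff_mem_ideal
    (P : Polynomial ℚ) (hPmonic : P.Monic) (hPirr : Irreducible P)
    (α : ℂ) (hα : Polynomial.aeval α P = 0)
    (Q : MvPolynomial (Fin 2) ℚ)
    (hQmonic : (MvPolynomial.aeval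
      ![Polynomial.C (AdjoinRoot.root P), Polynomial.X] Q).Monic)
    (hQirr : Irreducible (MvPolynomial.aeval
      ![Polynomial.C (AdjoinRoot.root P), Polynomial.X] Q))
    (hQdvd : (MvPolynomial.aeval
      ![Polynomial.C (AdjoinRoot.root P), Polynomial.X] Q) ∣
        Polynomial.map (algebraMap ℚ (AdjoinRoot P)) P)
    (hQα : MvPolynomial.aeval ![α, starRingEnd ℂ α] Q = 0)
    (a : Polynomial ℚ) :
    Polynomial.aeval α a = - starRingEnd ℂ (Polynomial.aeval α a) ↔
      Polynomial.aeval (MvPolynomial.X (0 : Fin 2)) a +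
          Polynomial.aeval (MvPolynomial.X (1 : Fin 2)) a ∈
        Ideal.span {Polynomial.aeval (MvPolynomial.X (0 : Fin 2)) P, Q} := by
  have key : ∀ R : MvPolynomial (Fin 2) ℚ,
      MvPolynomial.aeval ![α, starRingEnd ℂ α] R = 0 ↔
        R ∈ Ideal.span {Polynomial.aeval (MvPolynomial.X (0 : Fin 2)) P, Q} := by
    intro R
    constructor
    · intro hR
      have hψ := congr_psi P α hα (starRingEnd ℂ α)
      have hdvd : (MvPolynomial.aeval ![Polynomial.C (AdjoinRoot.root P), Polynomial.X] Q) ∣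
          (MvPolynomial.aeval ![Polynomial.C (AdjoinRoot.root P), Polynomial.X] R) := by
        by_contra hnd
        have hco := coprime_aux P hPirr _ _ hQirr hnd
        obtain ⟨u, v, huv⟩ := hco
        have h1 := congrArg (Polynomial.eval₂RingHom
          (AdjoinRoot.lift (algebraMap ℚ ℂ) α hα) (starRingEnd ℂ α)) huv
        rw [map_add, map_mul, map_mul, hψ, hψ, hQα, hR] at h1
        simp at h1
      obtain ⟨S, hS⟩ := hdvd
      have hθ := congr_theta P (Ideal.span {Polynomial.aeval (MvPolynomial.X (0 : Fin 2)) P, Q})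
        (Ideal.subset_span (by simp))
      obtain ⟨θ, hθ⟩ := hθ
      rw [← Ideal.Quotient.eq_zero_iff_mem, ← hθ, hS, map_mul, hθ,
        Ideal.Quotient.eq_zero_iff_mem.2 (Ideal.subset_span (by simp)), zero_mul]
    · intro hR
      have hle : Ideal.span {Polynomial.aeval (MvPolynomial.X (0 : Fin 2)) P, Q} ≤
          RingHom.ker (MvPolynomial.aeval (R := ℚ) ![α, starRingEnd ℂ α]) := by
        rw [Ideal.span_le]
        rintro x (rfl | rfl)
        · simp [RingHom.mem_ker, ← Polynomial.aeval_algHom_apply, hα]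
        · exact hQα
      exact hle hR
  have : starRingEnd ℂ (Polynomial.aeval α a) = Polynomial.aeval (starRingEnd ℂ α) a := by
    rw [Polynomial.aeval_def, Polynomial.aeval_def, Polynomial.hom_eval₂]
    congr 1
    exact Subsingleton.elim _ _
  rw [← key, map_add, eq_neg_iff_add_eq_zero, this,
    ← Polynomial.aeval_algHom_apply (MvPolynomial.aeval (R := ℚ) ![α, starRingEnd ℂ α]),
    ← Polynomial.aeval_algHom_apply (MvPolynomial.aeval (R := ℚ) ![α, starRingEnd ℂ α])]
  simp
end
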